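/- Let M : ℕ and let g : (Fin (M+1) → ℝ) → ℝ be the composition of stl_and_lt0 with the map sending a vector to the list of its coordinates. Then for every real p > 0 and every index i : Fin (M+1), the i-th partial derivative of g at the constant vector with value p exists and equals 1/(M+1). -/

import Mathlib

open Filter Topology Real

/-- Minimum of a list of reals (`0` for the empty list). -/
noncomputable def listMin (a : List ℝ) : ℝ := a.min?.getD 0

/-- Maximum of a list of reals (`0` for the empty list). -/
noncomputable def listMax (a : List ℝ) : ℝ := a.max?.getD 0

/-- STL conjunction, case `a_min < 0`. -/
noncomputable def stl_and_lt0 (ν : ℝ) (a : List ℝ) : ℝ :=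
  (a.map fun x => listMin a * exp ((x - listMin a) / listMin a)
      * exp (ν * ((x - listMin a) / listMin a))).sum /
  (a.map fun x => exp (ν * ((x - listMin a) / listMin a))).sum

/-- STL conjunction, case `a_min > 0`. -/
noncomputable def stl_and_gt0 (ν : ℝ) (a : List ℝ) : ℝ :=
  (a.map fun x => x * exp (-(ν * ((x - listMin a) / listMin a)))).sum /
  (a.map fun x => exp (-(ν * ((x - listMin a) / listMin a)))).sum

/-- The STL conjunction `and_S`. -/
noncomputable def and_S (ν : ℝ) (a : List ℝ) : ℝ :=
  if listMin a < 0 then stl_and_lt0 ν a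
  else if 0 < listMin a then stl_and_gt0 ν a
  else 0

/-- The STL disjunction `or_S`. -/
noncomputable def or_S (ν : ℝ) (a : List ℝ) : ℝ :=
  if 0 < listMax a then
    (a.map fun x => listMax a * exp ((x - listMax a) / listMax a)
        * exp (ν * ((x - listMax a) / listMax a))).sum /
    (a.map fun x => exp (ν * ((x - listMax a) / listMax a))).sum
  else if listMax a < 0 then
    (a.map fun x => x * exp (-(ν * ((x - listMax a) / listMax a)))).sum /
    (a.map fun x => exp (-(ν * ((x - listMax a) / listMax a)))).sum
  else 0

/-- The `i`-th partial derivative of `f` at `a` exists and equals `L`. -/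
def HasPartialDeriv {n : ℕ} (f : (Fin n → ℝ) → ℝ) (a : Fin n → ℝ) (i : Fin n) (L : ℝ) : Prop :=
  Filter.Tendsto (fun h : ℝ => h⁻¹ * (f (a + h • (Pi.single i 1 : Fin n → ℝ)) - f a))
    (𝓝[≠] (0 : ℝ)) (𝓝 L)

/-!
`stl_and_lt0` is a weighted mean of the scores `m * exp ((x - m) / m)`, where `m` is the minimum of
the list. The score agrees with `x` to first order at `(m, x) = (p, p)`; in particular it does not
depend on `m` to first order, so it is harmless that the minimum is not differentiable at a constant
vector: being Lipschitz is enough. All scores agree at the constant vector `p`, so varying the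
weights does not contribute to the derivative of the mean either, and since all weights equal `1`
there, that derivative is the plain average.
-/

open Asymptotics

section Calculus

variable {𝕜 E F G : Type*} [NontriviallyNormedField 𝕜]
  [NormedAddCommGroup E] [NormedSpace 𝕜 E] [NormedAddCommGroup F] [NormedSpace 𝕜 F]
  [NormedAddCommGroup G] [NormedSpace 𝕜 G]

theorem continuousAt_of_isBigO_sub {m : E → G} {x : E}
    (hm : (fun y => m y - m x) =O[𝓝 x] fun y => y - x) : ContinuousAt m x :=
  tendsto_sub_nhds_zero_iff.1 (hm.trans_tendsto (tendsto_sub_nhds_zero_iff.2 tendsto_id))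

theorem hasFDerivAt_smul_of_continuousAt_of_eq_zero {c : E → 𝕜} {f : E → F} {f' : E →L[𝕜] F}
    {x : E} (hc : ContinuousAt c x) (hf : HasFDerivAt f f' x) (hfx : f x = 0) :
    HasFDerivAt (fun y => c y • f y) (c x • f') x := by
  have hf_bigO : f =O[𝓝 x] fun y => y - x := by simpa only [hfx, sub_zero] using hf.isBigO_sub
  have hc_small : (fun y => c y - c x) =o[𝓝 x] fun _ => (1 : 𝕜) :=
    (isLittleO_one_iff 𝕜).2 (tendsto_sub_nhds_zero_iff.2 hc)
  have hweight : (fun y => (c y - c x) • f y) =o[𝓝 x] fun y => y - x := by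
    simpa only [one_smul] using hc_small.smul_isBigO hf_bigO
  refine .of_isLittleO (((hf.isLittleO.const_smul_left (c x)).add hweight).congr_left fun y => ?_)
  simp only [hfx, FunLike.coe_smul, Pi.smul_apply]
  module

theorem hasFDerivAt_centerMass_of_forall_eq {ι : Type*} {t : Finset ι} {w : ι → E → 𝕜}
    {z : ι → E → F} {z' : ι → E →L[𝕜] F} {x : E} {c : F}
    (hw : ∀ i ∈ t, ContinuousAt (w i) x) (hw₀ : ∑ i ∈ t, w i x ≠ 0)
    (hz : ∀ i ∈ t, HasFDerivAt (z i) (z' i) x) (hzc : ∀ i ∈ t, z i x = c) :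
    HasFDerivAt (fun y => t.centerMass (w · y) (z · y)) (t.centerMass (w · x) z') x := by
  have hsum : ContinuousAt (fun y => ∑ i ∈ t, w i y) x := tendsto_finsetSum t hw
  have hdev : HasFDerivAt (fun y => ∑ i ∈ t, w i y • (z i y - c)) (∑ i ∈ t, w i x • z' i) x :=
    .fun_sum fun i hi => hasFDerivAt_smul_of_continuousAt_of_eq_zero (hw i hi)
      ((hz i hi).sub_const c) (sub_eq_zero.2 (hzc i hi))
  have hdev₀ : ∑ i ∈ t, w i x • (z i x - c) = 0 :=
    Finset.sum_eq_zero fun i hi => by rw [hzc i hi, sub_self, smul_zero]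
  refine ((hasFDerivAt_smul_of_continuousAt_of_eq_zero (hsum.inv₀ hw₀) hdev hdev₀).add_const
    c).congr_of_eventuallyEq ?_
  filter_upwards [hsum.eventually_ne hw₀] with y hy
  simp only [Finset.centerMass, smul_sub, Finset.sum_sub_distrib, ← Finset.sum_smul,
    Pi.inv_apply, inv_smul_smul₀ hy, sub_add_cancel]

theorem hasFDerivAt_comp_prodMk_of_isBigO {H : Type*} [NormedAddCommGroup H] [NormedSpace 𝕜 H]
    {f : G × F → H} {L : F →L[𝕜] H} {m : E → G} {g : E → F} {g' : E →L[𝕜] F} {x : E}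
    (hf : HasFDerivAt f (L ∘L ContinuousLinearMap.snd 𝕜 G F) (m x, g x))
    (hm : (fun y => m y - m x) =O[𝓝 x] fun y => y - x) (hg : HasFDerivAt g g' x) :
    HasFDerivAt (fun y => f (m y, g y)) (L ∘L g') x := by
  have hpair : ContinuousAt (fun y => (m y, g y)) x :=
    (continuousAt_of_isBigO_sub hm).prodMk hg.continuousAt
  have hf_rem := (hf.isLittleO.comp_tendsto hpair).trans_isBigO (hm.prod_left hg.isBigO_sub)
  have hg_rem := (L.isBigO_comp _ _).trans_isLittleO hg.isLittleO
  refine .of_isLittleO ((hf_rem.add hg_rem).congr_left fun y => ?_)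
  simp

theorem hasPartialDeriv_of_hasFDerivAt {n : ℕ} {f : (Fin n → ℝ) → ℝ}
    {f' : (Fin n → ℝ) →L[ℝ] ℝ} {a : Fin n → ℝ} (hf : HasFDerivAt f f' a) (i : Fin n) :
    HasPartialDeriv f a i (f' (Pi.single i 1)) :=
  hasLineDerivAt_iff_tendsto_slope_zero.1 (hf.hasLineDerivAt _)

end Calculus

theorem listMin_mem {a : List ℝ} (ha : a ≠ []) : listMin a ∈ a := by
  obtain ⟨m, hm⟩ := Option.ne_none_iff_exists'.1 (mt List.min?_eq_none_iff.1 ha)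
  simpa only [listMin, hm, Option.getD_some] using List.min?_mem hm

section ConstantVector

variable {n : ℕ} [NeZero n]

theorem exists_eq_listMin_ofFn (v : Fin n → ℝ) : ∃ i, v i = listMin (List.ofFn v) :=
  List.mem_ofFn.1 (listMin_mem (mt List.ofFn_eq_nil_iff.1 (NeZero.ne n)))

theorem listMin_ofFn_const (p : ℝ) : listMin (List.ofFn fun _ : Fin n => p) = p := by
  obtain ⟨_, hp⟩ := exists_eq_listMin_ofFn fun _ : Fin n => p
  exact hp.symm

theorem abs_listMin_ofFn_sub_le (v : Fin n → ℝ) (p : ℝ) :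
    |listMin (List.ofFn v) - p| ≤ ‖v - fun _ => p‖ := by
  obtain ⟨i, hi⟩ := exists_eq_listMin_ofFn v
  rw [← hi]
  exact norm_le_pi_norm (v - fun _ => p) i

theorem isBigO_listMin_ofFn_sub_const (p : ℝ) :
    (fun v : Fin n → ℝ => listMin (List.ofFn v) - listMin (List.ofFn fun _ : Fin n => p))
      =O[𝓝 fun _ => p] fun v => v - fun _ => p := by
  simp only [listMin_ofFn_const]
  exact .of_bound' (.of_forall fun v => abs_listMin_ofFn_sub_le v p)

end ConstantVector

/-- The deviation `x̃` of `x` relative to the minimum `m`, with the minimum as a free parameter. -/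
noncomputable def relDev (m x : ℝ) : ℝ := (x - m) / m

theorem relDev_self (p : ℝ) : relDev p p = 0 := by simp [relDev]

theorem stl_and_lt0_ofFn (ν : ℝ) {n : ℕ} (v : Fin n → ℝ) :
    stl_and_lt0 ν (List.ofFn v) = Finset.univ.centerMass
      (fun i => exp (ν * relDev (listMin (List.ofFn v)) (v i)))
      (fun i => listMin (List.ofFn v) * exp (relDev (listMin (List.ofFn v)) (v i))) := by
  simp only [stl_and_lt0, relDev, List.map_ofFn, List.sum_ofFn, Function.comp_apply,
    Finset.centerMass, smul_eq_mul, div_eq_inv_mul, mul_comm (exp (ν * _))]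

theorem hasFDerivAt_relDev {p : ℝ} (hp : p ≠ 0) :
    HasFDerivAt (fun q : ℝ × ℝ => relDev q.1 q.2)
      (p⁻¹ • (ContinuousLinearMap.snd ℝ ℝ ℝ - ContinuousLinearMap.fst ℝ ℝ ℝ)) (p, p) := by
  have hsub : HasFDerivAt (fun q : ℝ × ℝ => q.2 - q.1)
      (ContinuousLinearMap.snd ℝ ℝ ℝ - ContinuousLinearMap.fst ℝ ℝ ℝ) (p, p) :=
    hasFDerivAt_snd.fun_sub hasFDerivAt_fst
  simp only [relDev, div_eq_inv_mul]
  exact hasFDerivAt_smul_of_continuousAt_of_eq_zero (continuousAt_fst.inv₀ hp) hsub (sub_self p)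

theorem hasFDerivAt_mul_exp_relDev {p : ℝ} (hp : p ≠ 0) :
    HasFDerivAt (fun q : ℝ × ℝ => q.1 * exp (relDev q.1 q.2)) (ContinuousLinearMap.snd ℝ ℝ ℝ)
      (p, p) := by
  refine (hasFDerivAt_fst.fun_mul (hasFDerivAt_relDev hp).exp).congr_fderiv ?_
  ext <;> simp [relDev_self, hp]

theorem shadowlifting_stl_and_lt0_general (ν : ℝ) {n : ℕ} [NeZero n] {p : ℝ} (hp : p ≠ 0) :
    HasFDerivAt (stl_and_lt0 ν ∘ fun v : Fin n → ℝ => List.ofFn v)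
      ((n : ℝ)⁻¹ • ∑ i, (ContinuousLinearMap.proj i : (Fin n → ℝ) →L[ℝ] ℝ)) (fun _ => p) := by
  let m (v : Fin n → ℝ) : ℝ := listMin (List.ofFn v)
  have hmp : m (fun _ => p) = p := listMin_ofFn_const p
  have hm : (fun v => m v - m fun _ => p) =O[𝓝 fun _ => p] fun v => v - fun _ => p :=
    isBigO_listMin_ofFn_sub_const p
  have hweight (i : Fin n) : ContinuousAt (fun v => exp (ν * relDev (m v) (v i))) fun _ => p :=
    (((hasFDerivAt_relDev hp).continuousAt.comp_of_eq
      ((continuousAt_of_isBigO_sub hm).prodMk (continuousAt_apply i _))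
      (by simp only [hmp])).const_mul ν).rexp
  have hscore (i : Fin n) : HasFDerivAt (fun v => m v * exp (relDev (m v) (v i)))
      (ContinuousLinearMap.proj i : (Fin n → ℝ) →L[ℝ] ℝ) fun _ => p := by
    refine hasFDerivAt_comp_prodMk_of_isBigO (f := fun q => q.1 * exp (relDev q.1 q.2))
      (L := .id ℝ ℝ) ?_ hm (hasFDerivAt_apply i _)
    rw [hmp]
    exact hasFDerivAt_mul_exp_relDev hp
  have hmean := hasFDerivAt_centerMass_of_forall_eq (t := Finset.univ) (c := p)
    (fun i _ => hweight i) (by simp [hmp, relDev_self, NeZero.ne n]) (fun i _ => hscore i)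
    (fun i _ => by simp [hmp, relDev_self])
  refine (hmean.congr_fderiv ?_).congr_of_eventuallyEq (.of_forall (stl_and_lt0_ofFn ν))
  simp [Finset.centerMass, hmp, relDev_self]

theorem shadowlifting_stl_and_lt0 (ν : ℝ) (hν : 0 < ν) (M : ℕ)
    (p : ℝ) (hp : 0 < p) (i : Fin (M + 1)) :
    HasPartialDeriv (stl_and_lt0 ν ∘ fun v : Fin (M + 1) → ℝ => List.ofFn v)
      (fun _ => p) i (1 / (M + 1)) := by
  simpa using hasPartialDeriv_of_hasFDerivAt
    (shadowlifting_stl_and_lt0_general ν (n := M + 1) hp.ne') i
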